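/- Let p be a prime, q = 1/p, let μ ≥ 1 be an integer, and set s = ⌊(μ−1)/2⌋. Then, as n → ∞, Q(n, p^μ) converges to the limit L = (q^μ − (Π_∞(q)/Π_∞(q²)) · ∑_{j=s+1}^{∞} (q^{μ+j} − q^{3j}) / Π_j(q²)) / (1−q), and this limit satisfies q^μ ≤ L ≤ q^μ/(1−q). -/

import Mathlib

/-- Number of symmetric `n × n` matrices over `ZMod m` with nonzero determinant. -/
noncomputable def Nsym (n m : ℕ) : ℕ :=
  Nat.card {A : Matrix (Fin n) (Fin n) (ZMod m) // A.IsSymm ∧ A.det ≠ 0}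

/-- Proportion of symmetric `n × n` matrices over `ZMod m` with nonzero determinant. -/
noncomputable def Psym (n m : ℕ) : ℝ :=
  (Nsym n m : ℝ) / (m : ℝ) ^ (n * (n + 1) / 2)

/-- `Q(n,m) = 1 - P(n,m)`. -/
noncomputable def Qsym (n m : ℕ) : ℝ := 1 - Psym n m

/-- `Π_n(t) = ∏_{j=1}^n (1 - t^j)`. -/
noncomputable def PiProd (n : ℕ) (t : ℝ) : ℝ :=
  ∏ j ∈ Finset.range n, (1 - t ^ (j + 1))

/-- `Π_∞(t) = ∏_{j=1}^∞ (1 - t^j)`. -/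
noncomputable def PiProdInf (t : ℝ) : ℝ :=
  ∏' j : ℕ, (1 - t ^ (j + 1))

/-!
Let `R` be a finite local ring whose maximal ideal is generated by `π`, with `π` nilpotent of index
`μ` and residue field of order `1 / q`, and let `P n i` be the probability that a random symmetric
`n × n` matrix `A` over `R` has `π ^ i * det A ≠ 0`. Condition on the first row `(a, b)` of `A`.
If `a` is a unit, or if `a` is not but some entry of `b` is, then a Schur complement removes one or
two rows and columns; otherwise a factor `π` comes out of the first row, after which the corner is
again uniform, and if it is still a nonunit a further `π` comes out of the first column. This is a
linear recurrence for `P`. Since `P n i = 0` for `i ≥ μ`, an identity of the form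
`y i = c * y (i + d)` forces `y = 0`, and in this way the recurrence first yields first-order
relations between consecutive `n`, and then one for odd `n` alone, which is solved by the expansion
of `∏ (1 - u ^ j * y)⁻¹` with `u = q ^ 2` and `y = q ^ 3`. Letting `n → ∞` turns this solution into
a finite sum, whose complementary tail is evaluated by Euler's series for `1 / (y; u)_∞`.
-/

open Matrix IsLocalRing Filter Topology
open scoped BigOperators

section Expectation

lemma expect_eq_of_forall_notMem_range {G H : Type*} [AddGroup G] [Fintype G] [AddGroup H]
    [Fintype H] (φ : H →+ G) {f : G → ℝ} {c : ℝ} (hf : ∀ x ∉ φ.range, f x = c) :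
    𝔼 x, f x = (1 - 1 / (φ.range.index : ℝ)) * c + 1 / (φ.range.index : ℝ) * 𝔼 y, f (φ y) := by
  classical
  have hfiber : ∑ y, (f (φ y) - c) = Nat.card φ.ker * ∑ x, (f x - c) := by
    rw [← Finset.sum_fiberwise' Finset.univ φ fun x => f x - c, Finset.mul_sum]
    refine Finset.sum_congr rfl fun x _ => ?_
    by_cases hx : x ∈ φ.range
    · rw [Finset.sum_const, nsmul_eq_mul,
        AddMonoidHom.card_fiber_eq_of_mem_range φ hx ⟨0, map_zero φ⟩,
        ← Fintype.card_subtype, ← Nat.card_eq_fintype_card]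
      rfl
    · simp [hf x hx]
  have hH : (Nat.card φ.ker * Nat.card φ.range : ℝ) = Fintype.card H := by
    rw [← AddSubgroup.index_ker, ← Nat.card_eq_fintype_card]
    exact_mod_cast φ.ker.card_mul_index
  have hG : (Nat.card φ.range * φ.range.index : ℝ) = Fintype.card G := by
    rw [← Nat.card_eq_fintype_card]
    exact_mod_cast φ.range.card_mul_index
  have hker : (Nat.card φ.ker : ℝ) ≠ 0 := Nat.cast_ne_zero.2 Nat.card_pos.ne'
  have hrange : (Nat.card φ.range : ℝ) ≠ 0 := Nat.cast_ne_zero.2 Nat.card_pos.ne'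
  have hindex : (φ.range.index : ℝ) ≠ 0 := Nat.cast_ne_zero.2 AddSubgroup.index_ne_zero_of_finite
  simp only [Finset.sum_sub_distrib, Finset.sum_const, Finset.card_univ, nsmul_eq_mul,
    ← hH, ← hG] at hfiber
  rw [Fintype.expect_eq_sum_div_card, Fintype.expect_eq_sum_div_card, ← hH, ← hG]
  field_simp
  linear_combination -hfiber

variable {R : Type*} [CommRing R] [IsLocalRing R] {π : R}

lemma dvd_of_not_isUnit (hπ : maximalIdeal R = Ideal.span {π}) {a : R} (ha : ¬IsUnit a) :
    π ∣ a := by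
  rwa [← Ideal.mem_span_singleton, ← hπ, mem_maximalIdeal]

lemma index_range_smul (hπ : maximalIdeal R = Ideal.span {π}) :
    (DistribSMul.toAddMonoidHom R π).range.index = Nat.card (ResidueField R) := by
  have hrange : (DistribSMul.toAddMonoidHom R π).range = (maximalIdeal R).toAddSubgroup := by
    ext x
    simp [hπ, Ideal.mem_span_singleton', mul_comm]
  rw [hrange]
  rfl

lemma index_range_smul_pi (hπ : maximalIdeal R = Ideal.span {π}) (ι : Type*) [Fintype ι] :
    (DistribSMul.toAddMonoidHom (ι → R) π).range.index =
      Nat.card (ResidueField R) ^ Fintype.card ι := by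
  have hrange : (DistribSMul.toAddMonoidHom (ι → R) π).range =
      AddSubgroup.pi Set.univ fun _ => (DistribSMul.toAddMonoidHom R π).range := by
    ext b
    simp [AddSubgroup.mem_pi, funext_iff, Classical.skolem]
  rw [hrange, AddSubgroup.index_pi]
  simp [index_range_smul hπ]

variable [Fintype R] {q : ℝ}

lemma expect_eq_of_forall_isUnit (hπ : maximalIdeal R = Ideal.span {π})
    (hq : q = 1 / Nat.card (ResidueField R)) {f : R → ℝ} {c : ℝ} (hf : ∀ a, IsUnit a → f a = c) :
    𝔼 a, f a = (1 - q) * c + q * 𝔼 a, f (π * a) := by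
  have hrange (a : R) (ha : a ∉ (DistribSMul.toAddMonoidHom R π).range) : f a = c := by
    by_contra hne
    obtain ⟨b, rfl⟩ := dvd_of_not_isUnit hπ (hne ∘ hf a)
    exact ha ⟨b, rfl⟩
  have h := expect_eq_of_forall_notMem_range (DistribSMul.toAddMonoidHom R π) hrange
  rwa [index_range_smul hπ, ← hq] at h

lemma expect_pi_eq_of_forall_isUnit {ι : Type*} [Fintype ι] [DecidableEq ι]
    (hπ : maximalIdeal R = Ideal.span {π}) (hq : q = 1 / Nat.card (ResidueField R))
    {f : (ι → R) → ℝ} {c : ℝ} (hf : ∀ b i, IsUnit (b i) → f b = c) :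
    𝔼 b, f b = (1 - q ^ Fintype.card ι) * c + q ^ Fintype.card ι * 𝔼 b, f (π • b) := by
  have hrange (b : ι → R) (hb : b ∉ (DistribSMul.toAddMonoidHom (ι → R) π).range) : f b = c := by
    by_contra hne
    choose d hd using fun i => dvd_of_not_isUnit hπ (hne ∘ hf b i)
    exact hb ⟨d, (funext hd).symm⟩
  have h := expect_eq_of_forall_notMem_range (DistribSMul.toAddMonoidHom (ι → R) π) hrange
  rwa [index_range_smul_pi hπ, Nat.cast_pow, ← _root_.one_div_pow, ← hq] at h

end Expectation

section Bordered

variable {R ι κ : Type*}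

/-- The type of symmetric matrices over `R` with rows and columns indexed by `ι`. -/
abbrev SymmMatrix (ι R : Type*) : Type _ := {A : Matrix ι ι R // A.IsSymm}

noncomputable instance [Finite ι] [Finite R] : Fintype (SymmMatrix ι R) := Fintype.ofFinite _

/-- The symmetric bordering of `D`: the matrix with corner entry `a`, first row and first column
`b`, and remaining block `D`. -/
def bordered (a : R) (b : ι → R) (D : Matrix ι ι R) : Matrix (Unit ⊕ ι) (Unit ⊕ ι) R :=
  fromBlocks (of fun _ _ => a) (replicateRow Unit b) (replicateCol Unit b) D

lemma isSymm_bordered (a : R) (b : ι → R) {D : Matrix ι ι R} (hD : D.IsSymm) :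
    (bordered a b D).IsSymm :=
  isSymm_fromBlocks_iff.2 ⟨rfl, rfl, rfl, hD⟩

/-- A symmetric matrix on `Unit ⊕ ι` is the bordering of a symmetric matrix on `ι`. -/
def borderedEquiv : R × (ι → R) × SymmMatrix ι R ≃ SymmMatrix (Unit ⊕ ι) R where
  toFun x := ⟨bordered x.1 x.2.1 x.2.2.1, isSymm_bordered _ _ x.2.2.2⟩
  invFun A := (A.1 (.inl ()) (.inl ()), fun j => A.1 (.inl ()) (.inr j),
    ⟨A.1.submatrix .inr .inr, A.2.submatrix _⟩)
  left_inv _ := rfl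
  right_inv A := by
    ext (i | i) (j | j)
    exacts [rfl, rfl, A.2.apply _ _, rfl]

/-- Reindexing the rows and columns of a symmetric matrix by the same bijection. -/
def symmReindexEquiv (e : ι ≃ κ) : SymmMatrix ι R ≃ SymmMatrix κ R :=
  (reindex e e).subtypeEquiv fun _ =>
    ⟨fun hA => hA.submatrix _, fun hA => by simpa using hA.submatrix e⟩

/-- Translation of symmetric matrices by a symmetric matrix. -/
def symmSubEquiv [AddGroup R] {C : Matrix ι ι R} (hC : C.IsSymm) :
    SymmMatrix ι R ≃ SymmMatrix ι R :=
  (Equiv.subRight C).subtypeEquiv fun _ =>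
    ⟨fun hA => hA.sub hC, fun hA => by simpa using hA.add hC⟩

variable [CommRing R] [Fintype ι] [DecidableEq ι] [Fintype κ] [DecidableEq κ]

lemma det_bordered_smul (a c : R) (b : ι → R) (D : Matrix ι ι R) :
    (bordered (c * a) (c • b) D).det =
      c * (fromBlocks (of fun _ _ => a) (replicateRow Unit b)
        (c • (replicateRow Unit b)ᵀ) D).det := by
  have hrow := det_mul_column (Sum.elim (fun _ : Unit => c) 1)
    (fromBlocks (of fun _ _ => a) (replicateRow Unit b) (c • (replicateRow Unit b)ᵀ) D)
  rw [Fintype.prod_sum_type] at hrow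
  simp only [Sum.elim_inl, Sum.elim_inr, Pi.one_apply, Finset.prod_const_one, mul_one,
    Finset.univ_unique, Finset.prod_singleton] at hrow
  rw [← hrow]
  congr 1
  ext (i | i) (j | j) <;> simp [bordered]

lemma det_bordered_mul_mul_smul (a c : R) (b : ι → R) (D : Matrix ι ι R) :
    (bordered (c * (c * a)) (c • b) D).det = c * (c * (bordered a b D).det) := by
  have hcol := det_mul_row (Sum.elim (fun _ : Unit => c) 1) (bordered a b D)
  rw [Fintype.prod_sum_type] at hcol
  simp only [Sum.elim_inl, Sum.elim_inr, Pi.one_apply, Finset.prod_const_one, mul_one,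
    Finset.univ_unique, Finset.prod_singleton] at hcol
  rw [det_bordered_smul, ← hcol]
  congr 2
  ext (i | i) (j | j) <;> simp [bordered]

lemma det_bordered_submatrix (e : ι ≃ κ) (a : R) (b : κ → R) (D : Matrix ι ι R) :
    (bordered a b (reindex e e D)).det = (bordered a (b ∘ e) D).det := by
  rw [← det_submatrix_equiv_self (Equiv.sumCongr (Equiv.refl Unit) e)]
  congr 1
  ext (i | i) (j | j) <;> simp [bordered]

lemma det_bordered_bordered (a d : R) (b : Unit ⊕ κ → R) (c : κ → R) (D : Matrix κ κ R) :
    (bordered a b (bordered d c D)).det =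
      (fromBlocks (bordered a (b ∘ .inl) (of fun _ _ => d))
        (fromRows (replicateRow Unit (b ∘ .inr)) (replicateRow Unit c))
        (fromRows (replicateRow Unit (b ∘ .inr)) (replicateRow Unit c))ᵀ D).det := by
  rw [← det_submatrix_equiv_self (Equiv.sumAssoc Unit Unit κ)]
  congr 1
  ext ((i | i) | i) ((j | j) | j) <;> rfl

lemma isUnit_det_bordered_unit [IsLocalRing R] {a : R} (ha : ¬IsUnit a) {b : Unit → R}
    (hb : IsUnit (b ())) (D : Matrix Unit Unit R) : IsUnit (bordered a b D).det := by
  have hdet : (bordered a b D).det = a * D () () - b () * b () := by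
    let e : Fin 1 ≃ Unit := Equiv.ofUnique _ _
    rw [← det_submatrix_equiv_self (finSumFinEquiv.symm.trans (e.sumCongr e)), det_fin_two]
    rfl
  rw [← residue_ne_zero_iff_isUnit, hdet, map_sub, map_mul, map_mul,
    (residue_eq_zero_iff a).2 ha, zero_mul, zero_sub, neg_ne_zero, mul_self_ne_zero]
  exact (residue_ne_zero_iff_isUnit _).2 hb

lemma exists_det_fromBlocks_eq {A : Matrix ι ι R} (hA : A.IsSymm) (hdet : IsUnit A.det)
    (B : Matrix ι κ R) (c : R) :
    ∃ C : Matrix κ κ R, C.IsSymm ∧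
      ∀ D, (fromBlocks A B (c • Bᵀ) D).det = A.det * (D - C).det := by
  let := A.invertibleOfIsUnitDet hdet
  refine ⟨c • (Bᵀ * A⁻¹ * B), ?_, fun D => ?_⟩
  · rw [IsSymm, transpose_smul, transpose_mul, transpose_mul, transpose_transpose,
      transpose_nonsing_inv, hA.eq, Matrix.mul_assoc]
  · rw [det_fromBlocks₁₁, invOf_eq_nonsing_inv, smul_mul, smul_mul]

end Bordered

section DeterminantMean

lemma expect_symm_reindex {R ι κ : Type*} [Finite R] [Finite ι] [Finite κ] (e : ι ≃ κ)
    (G : Matrix κ κ R → ℝ) :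
    𝔼 A : SymmMatrix ι R, G (reindex e e A.1) = 𝔼 A : SymmMatrix κ R, G A.1 :=
  Fintype.expect_equiv (symmReindexEquiv e) _ _ fun _ => rfl

lemma expect_symm_bordered {R ι : Type*} [Fintype R] [Fintype ι] [DecidableEq ι]
    (G : Matrix (Unit ⊕ ι) (Unit ⊕ ι) R → ℝ) :
    𝔼 A : SymmMatrix (Unit ⊕ ι) R, G A.1 =
      𝔼 a : R, 𝔼 b : ι → R, 𝔼 D : SymmMatrix ι R, G (bordered a b D.1) := by
  rw [← Fintype.expect_equiv borderedEquiv (fun x => G (bordered x.1 x.2.1 x.2.2.1)) _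
    fun _ => rfl, ← Finset.univ_product_univ, Finset.expect_product]
  simp only [← Finset.univ_product_univ, Finset.expect_product]

variable {R : Type*} [CommRing R] [Fintype R] {ι κ : Type*} [Fintype ι] [DecidableEq ι] [Fintype κ]
  [DecidableEq κ] {F : R → ℝ}

/-- The average of `F (det A)` over the symmetric `n × n` matrices `A` over `R`. -/
noncomputable def symmDetMean (n : ℕ) (F : R → ℝ) : ℝ :=
  𝔼 A : SymmMatrix (Fin n) R, F A.1.det

lemma expect_symm_det (F : R → ℝ) :
    𝔼 A : SymmMatrix ι R, F A.1.det = symmDetMean (Fintype.card ι) F := by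
  simp only [symmDetMean, ← expect_symm_reindex (Fintype.equivFin ι) fun A => F A.det,
    det_reindex_self]

lemma symmDetMean_succ (n : ℕ) (F : R → ℝ) :
    symmDetMean (n + 1) F = 𝔼 a : R, 𝔼 b : Fin n → R, 𝔼 D : SymmMatrix (Fin n) R,
      F (bordered a b D.1).det := by
  rw [← expect_symm_bordered fun A => F A.det, expect_symm_det, Fintype.card_sum,
    Fintype.card_unit, Fintype.card_fin, add_comm]

lemma expect_det_fromBlocks (hF : ∀ u d, IsUnit u → F (u * d) = F d) {A : Matrix ι ι R}
    (hA : A.IsSymm) (hdet : IsUnit A.det) (B : Matrix ι κ R) (c : R) :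
    𝔼 D : SymmMatrix κ R, F (fromBlocks A B (c • Bᵀ) D.1).det =
      symmDetMean (Fintype.card κ) F := by
  obtain ⟨C, hC, hschur⟩ := exists_det_fromBlocks_eq hA hdet B c
  rw [← expect_symm_det]
  exact Fintype.expect_equiv (symmSubEquiv hC) _ _ fun D => by rw [hschur, hF _ _ hdet]; rfl

lemma expect_bordered_smul_of_isUnit (hF : ∀ u d, IsUnit u → F (u * d) = F d) {a : R}
    (ha : IsUnit a) (c : R) (b : ι → R) :
    𝔼 D : SymmMatrix ι R, F (bordered (c * a) (c • b) D.1).det =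
      symmDetMean (Fintype.card ι) fun d => F (c * d) := by
  simp only [det_bordered_smul]
  refine expect_det_fromBlocks (F := fun d => F (c * d)) (fun u d hu => ?_)
    (A := of fun _ _ => a) rfl ?_ _ c
  · rw [mul_left_comm, hF u _ hu]
  · rwa [det_unique]

lemma expect_bordered_of_not_isUnit [IsLocalRing R] (hF : ∀ u d, IsUnit u → F (u * d) = F d)
    {a : R} (ha : ¬IsUnit a) {b : ι → R} {i : ι} (hb : IsUnit (b i)) :
    𝔼 D : SymmMatrix ι R, F (bordered a b D.1).det = symmDetMean (Fintype.card ι - 1) F := by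
  let e : Unit ⊕ {j // j ≠ i} ≃ ι := (Equiv.sumComm _ _).trans
    ((Equiv.optionEquivSumPUnit _).symm.trans (Equiv.optionSubtypeNe i))
  have hb' : IsUnit ((b ∘ e) (.inl ())) := by simpa [e] using hb
  rw [← expect_symm_reindex e fun D => F (bordered a b D).det]
  simp only [det_bordered_submatrix]
  rw [expect_symm_bordered fun D => F (bordered a (b ∘ e) D).det]
  have hmean (d : R) (c : {j // j ≠ i} → R) :
      𝔼 D : SymmMatrix {j // j ≠ i} R, F (bordered a (b ∘ e) (bordered d c D.1)).det =
        symmDetMean (Fintype.card ι - 1) F := by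
    have hblock := expect_det_fromBlocks hF
      (isSymm_bordered a (b ∘ e ∘ .inl) (D := of fun _ _ => d) rfl)
      (isUnit_det_bordered_unit ha hb' _)
      (fromRows (replicateRow Unit (b ∘ e ∘ .inr)) (replicateRow Unit c)) 1
    rw [one_smul, Fintype.card_subtype_compl, Fintype.card_subtype_eq] at hblock
    simp only [det_bordered_bordered]
    exact hblock
  simp only [hmean, Fintype.expect_const]

theorem symmDetMean_recurrence [IsLocalRing R] {π : R} (hπ : maximalIdeal R = Ideal.span {π})
    {q : ℝ} (hq : q = 1 / Nat.card (ResidueField R))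
    (hF : ∀ u d, IsUnit u → F (u * d) = F d) (n : ℕ) :
    symmDetMean (n + 1) F = (1 - q) * symmDetMean n F + q * (1 - q ^ n) * symmDetMean (n - 1) F +
      q ^ (n + 1) * ((1 - q) * symmDetMean n (fun d => F (π * d)) +
        q * symmDetMean (n + 1) fun d => F (π * (π * d))) := by
  set T : R → (Fin n → R) → ℝ := fun a b => 𝔼 D : SymmMatrix (Fin n) R, F (bordered a b D.1).det
    with hT
  have hunit (a b) (ha : IsUnit a) : T a b = symmDetMean n F := by
    simpa using expect_bordered_smul_of_isUnit hF ha 1 b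
  have hπunit (a b) (ha : IsUnit a) : T (π * a) (π • b) = symmDetMean n fun d => F (π * d) := by
    simpa using expect_bordered_smul_of_isUnit hF ha π b
  have hππ : 𝔼 a, 𝔼 b, T (π * (π * a)) (π • b) = symmDetMean (n + 1) fun d => F (π * (π * d)) := by
    simp only [symmDetMean_succ, hT, det_bordered_mul_mul_smul]
  have hπmem (a : R) : ¬IsUnit (π * a) := fun h => by
    have : π ∈ maximalIdeal R := hπ ▸ Ideal.mem_span_singleton_self π
    exact this (isUnit_of_mul_isUnit_left h)
  have hcorner (a : R) : 𝔼 b, T (π * a) b =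
      (1 - q ^ n) * symmDetMean (n - 1) F + q ^ n * 𝔼 b, T (π * a) (π • b) := by
    simpa using expect_pi_eq_of_forall_isUnit hπ hq (f := T (π * a))
      fun b i hb => expect_bordered_of_not_isUnit hF (hπmem a) hb
  rw [symmDetMean_succ, expect_eq_of_forall_isUnit hπ hq fun a ha =>
    (Finset.expect_congr rfl fun b _ => hunit a b ha).trans (Fintype.expect_const _)]
  simp only [hcorner, Finset.expect_add_distrib, Fintype.expect_const, ← Finset.mul_expect]
  rw [expect_eq_of_forall_isUnit hπ hq fun a ha =>
    (Finset.expect_congr rfl fun b _ => hπunit a b ha).trans (Fintype.expect_const _), hππ]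
  ring

end DeterminantMean

section Proportion

lemma natCard_symmMatrix (ι R : Type*) [Fintype ι] :
    Nat.card (SymmMatrix ι R) = Nat.card R ^ (Fintype.card ι * (Fintype.card ι + 1) / 2) := by
  classical
  have e : SymmMatrix ι R ≃ (Sym2 ι → R) :=
    ((of (m := ι) (n := ι) (α := R)).symm.subtypeEquiv fun A =>
      ⟨fun hA i j => hA.apply j i, fun hA => IsSymm.ext fun i j => hA j i⟩).trans Sym2.lift
  rw [Nat.card_congr e, Nat.card_fun, Nat.card_eq_fintype_card (α := Sym2 ι), Sym2.card,
    Nat.choose_two_right, Nat.add_sub_cancel, mul_comm]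

variable {R : Type*} [CommRing R] [Fintype R]

lemma symmDetMean_ite_eq_zero [DecidableEq R] (n : ℕ) :
    symmDetMean n (fun d : R => if d = 0 then 0 else 1) =
      (Nat.card {A : Matrix (Fin n) (Fin n) R // A.IsSymm ∧ A.det ≠ 0} : ℝ) /
        (Nat.card R : ℝ) ^ (n * (n + 1) / 2) := by
  have hcard := natCard_symmMatrix (Fin n) R
  rw [Fintype.card_fin] at hcard
  rw [symmDetMean, Fintype.expect_eq_sum_div_card, ← Nat.card_eq_fintype_card, hcard, Nat.cast_pow]
  congr 1
  simp only [← ite_not (_ = (0 : R))]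
  rw [Finset.sum_boole, ← Fintype.card_subtype, ← Nat.card_eq_fintype_card,
    Nat.card_congr (Equiv.subtypeSubtypeEquivSubtypeInter
      (fun A : Matrix (Fin n) (Fin n) R => A.IsSymm) fun A => A.det ≠ 0)]

end Proportion

section QSeries

variable {u y : ℝ}

/-- The `q`-Pochhammer symbol `(y; u)_m = ∏_{i < m} (1 - u ^ i * y)`; thus `PiProd m u` is
`(u; u)_m`. -/
noncomputable def qPochhammer (y u : ℝ) (m : ℕ) : ℝ :=
  ∏ i ∈ Finset.range m, (1 - u ^ i * y)

lemma PiProd_eq_qPochhammer (m : ℕ) (u : ℝ) : PiProd m u = qPochhammer u u m := rfl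

lemma qPochhammer_succ (y u : ℝ) (m : ℕ) :
    qPochhammer y u (m + 1) = qPochhammer y u m * (1 - u ^ m * y) :=
  Finset.prod_range_succ _ _

lemma qPochhammer_succ' (y u : ℝ) (m : ℕ) :
    qPochhammer y u (m + 1) = (1 - y) * qPochhammer (u * y) u m := by
  simp only [qPochhammer, Finset.prod_range_succ', pow_zero, one_mul, pow_succ, mul_assoc]
  exact mul_comm _ _

lemma qPochhammer_pos (hu0 : 0 ≤ u) (hu1 : u ≤ 1) (hy0 : 0 ≤ y) (hy1 : y < 1) (m : ℕ) :
    0 < qPochhammer y u m :=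
  Finset.prod_pos fun _ _ => sub_pos.2 <|
    mul_lt_one_of_nonneg_of_lt_one_right (pow_le_one₀ hu0 hu1) hy0 hy1

lemma PiProd_pos (hu0 : 0 ≤ u) (hu1 : u < 1) (m : ℕ) : 0 < PiProd m u :=
  qPochhammer_pos hu0 hu1.le hu0 hu1 m

/-- The coefficient of `T ^ j` in the power series `∏_{i < m} (1 - u ^ i * y * T)⁻¹`; it equals
`y ^ j` times the Gaussian binomial coefficient of `m + j - 1` and `j`. -/
noncomputable def qPochhammerInvCoeff (y u : ℝ) (m j : ℕ) : ℝ :=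
  y ^ j * qPochhammer (u ^ m) u j / PiProd j u

lemma qPochhammerInvCoeff_zero_right (y u : ℝ) (m : ℕ) : qPochhammerInvCoeff y u m 0 = 1 := by
  simp [qPochhammerInvCoeff, qPochhammer, PiProd]

lemma qPochhammerInvCoeff_zero_succ (y u : ℝ) (j : ℕ) :
    qPochhammerInvCoeff y u 0 (j + 1) = 0 := by
  simp [qPochhammerInvCoeff, qPochhammer_succ']

lemma qPochhammerInvCoeff_succ_succ (hu0 : 0 ≤ u) (hu1 : u < 1) (m j : ℕ) :
    qPochhammerInvCoeff y u (m + 1) (j + 1) =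
      u ^ m * y * qPochhammerInvCoeff y u (m + 1) j + qPochhammerInvCoeff y u m (j + 1) := by
  have hPi := (PiProd_pos hu0 hu1 j).ne'
  have hfactor : 1 - u ^ j * u ≠ 0 :=
    (sub_pos.2 (by rw [← pow_succ]; exact pow_lt_one₀ hu0 hu1 j.succ_ne_zero)).ne'
  rw [qPochhammerInvCoeff, qPochhammerInvCoeff, qPochhammerInvCoeff, qPochhammer_succ,
    qPochhammer_succ' (u ^ m), ← pow_succ', PiProd_eq_qPochhammer, PiProd_eq_qPochhammer,
    qPochhammer_succ u, ← PiProd_eq_qPochhammer]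
  field_simp
  ring

lemma sum_qPochhammerInvCoeff_succ (hu0 : 0 ≤ u) (hu1 : u < 1) (f : ℕ → ℝ) (m K : ℕ) :
    ∑ j ∈ Finset.range (K + 1), qPochhammerInvCoeff y u (m + 1) j * f j =
      ∑ j ∈ Finset.range (K + 1), qPochhammerInvCoeff y u m j * f j +
        u ^ m * y * ∑ j ∈ Finset.range K, qPochhammerInvCoeff y u (m + 1) j * f (j + 1) := by
  simp only [Finset.sum_range_succ' _ K, qPochhammerInvCoeff_zero_right,
    qPochhammerInvCoeff_succ_succ hu0 hu1, Finset.mul_sum, add_mul, Finset.sum_add_distrib,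
    mul_assoc]
  ring

end QSeries

section Recurrence

lemma eq_zero_of_eq_mul_shift {y : ℕ → ℝ} {c : ℝ} {d N : ℕ} (hd : d ≠ 0)
    (hN : ∀ i, N ≤ i → y i = 0) (hy : ∀ i, y i = c * y (i + d)) (i : ℕ) : y i = 0 := by
  have hiter (k : ℕ) : y i = c ^ k * y (i + k * d) := by
    induction k with
    | zero => simp
    | succ k ih => rw [ih, hy, pow_succ, mul_assoc, add_assoc, Nat.succ_mul]
  rw [hiter N, hN _ (le_add_left (Nat.le_mul_of_pos_right N (Nat.pos_of_ne_zero hd))), mul_zero]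

/-- The recurrence for the probability `P n i` that a uniformly random symmetric `n × n` matrix
over a finite chain ring satisfies `π ^ i * det A ≠ 0`, where `π` is a uniformizer of nilpotency
index `N` and the residue field has `1 / q` elements. In `step` the truncated `n - 1` at `n = 0` is
harmless, as its coefficient vanishes. -/
structure DetRecurrence (q : ℝ) (N : ℕ) (P : ℕ → ℕ → ℝ) : Prop where
  zero_of_le : ∀ n i, N ≤ i → P n i = 0
  zero_left : ∀ i, i < N → P 0 i = 1
  step : ∀ n i, P (n + 1) i = (1 - q) * P n i + q * (1 - q ^ n) * P (n - 1) i +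
    q ^ (n + 1) * ((1 - q) * P n (i + 1) + q * P (n + 1) (i + 2))

namespace DetRecurrence

variable {q : ℝ} {N : ℕ} {P : ℕ → ℕ → ℝ}

lemma odd_of_even (hP : DetRecurrence q N P) (n : ℕ)
    (heven : n ≠ 0 → ∀ i, P n i =
      q ^ (n + 1) * P n (i + 2) + P (n - 1) i - q ^ (n + 1) * P (n - 1) (i + 1)) (i : ℕ) :
    P (n + 1) i = q ^ (n + 1) * P (n + 1) (i + 1) + (1 - q ^ (n + 1)) * P n i := by
  have hweighted (i : ℕ) : (1 - q ^ n) * P n i = (1 - q ^ n) *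
      (q ^ (n + 1) * P n (i + 2) + P (n - 1) i - q ^ (n + 1) * P (n - 1) (i + 1)) := by
    rcases eq_or_ne n 0 with rfl | hn
    · simp
    · rw [← heven hn]
  refine sub_eq_zero.1 (eq_zero_of_eq_mul_shift (c := q ^ (n + 2)) (N := N) (y := fun i =>
    P (n + 1) i - (q ^ (n + 1) * P (n + 1) (i + 1) + (1 - q ^ (n + 1)) * P n i))
    two_ne_zero (fun i hi => ?_) (fun i => ?_) i)
  · simp [hP.zero_of_le _ _ hi, hP.zero_of_le _ _ (Nat.le_add_right_of_le hi)]
  · linear_combination hP.step n i - q ^ (n + 1) * hP.step n (i + 1) - q * hweighted i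

lemma even_of_odd (hP : DetRecurrence q N P) (n : ℕ)
    (hodd : ∀ i, P (n + 1) i = q ^ (n + 1) * P (n + 1) (i + 1) + (1 - q ^ (n + 1)) * P n i)
    (i : ℕ) :
    P (n + 2) i = q ^ (n + 3) * P (n + 2) (i + 2) + P (n + 1) i -
      q ^ (n + 3) * P (n + 1) (i + 1) := by
  have hstep := hP.step (n + 1) i
  rw [Nat.add_sub_cancel] at hstep
  linear_combination hstep - q * hodd i

lemma odd_eq (hP : DetRecurrence q N P) (m i : ℕ) :
    P (2 * m + 1) i =
      q ^ (2 * m + 1) * P (2 * m + 1) (i + 1) + (1 - q ^ (2 * m + 1)) * P (2 * m) i := by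
  induction m generalizing i with
  | zero => exact hP.odd_of_even 0 (fun h => absurd rfl h) i
  | succ m ih => exact hP.odd_of_even (2 * m + 2) (fun _ => hP.even_of_odd (2 * m) ih) i

lemma even_eq (hP : DetRecurrence q N P) (m i : ℕ) :
    P (2 * m + 2) i = q ^ (2 * m + 3) * P (2 * m + 2) (i + 2) + P (2 * m + 1) i -
      q ^ (2 * m + 3) * P (2 * m + 1) (i + 1) :=
  hP.even_of_odd (2 * m) (hP.odd_eq m) i

lemma odd_step (hP : DetRecurrence q N P) (m i : ℕ) :
    P (2 * m + 3) i =
      q ^ (2 * m + 3) * P (2 * m + 3) (i + 2) + (1 - q ^ (2 * m + 3)) * P (2 * m + 1) i := by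
  refine sub_eq_zero.1 (eq_zero_of_eq_mul_shift (c := q ^ (2 * m + 3)) (N := N) (y := fun i =>
    P (2 * m + 3) i - (q ^ (2 * m + 3) * P (2 * m + 3) (i + 2) +
      (1 - q ^ (2 * m + 3)) * P (2 * m + 1) i)) one_ne_zero (fun i hi => ?_) (fun i => ?_) i)
  · simp [hP.zero_of_le _ _ hi, hP.zero_of_le _ _ (Nat.le_add_right_of_le hi)]
  · have hodd (i : ℕ) : P (2 * m + 3) i =
        q ^ (2 * m + 3) * P (2 * m + 3) (i + 1) + (1 - q ^ (2 * m + 3)) * P (2 * m + 2) i :=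
      hP.odd_eq (m + 1) i
    linear_combination hodd i - q ^ (2 * m + 3) * hodd (i + 2) +
      (1 - q ^ (2 * m + 3)) * hP.even_eq m i

lemma one_left (hP : DetRecurrence q N P) (i : ℕ) : P 1 i = 1 - q ^ (N - i) := by
  refine sub_eq_zero.1 (eq_zero_of_eq_mul_shift (c := q) (N := N)
    (y := fun i => P 1 i - (1 - q ^ (N - i))) one_ne_zero (fun i hi => ?_) (fun i => ?_) i)
  · simp [hP.zero_of_le _ _ hi, Nat.sub_eq_zero_of_le hi]
  · rcases lt_or_ge i N with hi | hi
    · have hodd : P 1 i = q ^ 1 * P 1 (i + 1) + (1 - q ^ 1) * P 0 i := hP.odd_eq 0 i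
      have hpow : q ^ (N - i) = q * q ^ (N - (i + 1)) := by
        rw [← pow_succ', Nat.sub_add_eq, Nat.sub_add_cancel (Nat.sub_pos_of_lt hi)]
      linear_combination hodd + hpow + (1 - q) * hP.zero_left i hi
    · simp [hP.zero_of_le _ _ hi, hP.zero_of_le _ _ (Nat.le_add_right_of_le hi),
        Nat.sub_eq_zero_of_le hi, Nat.sub_eq_zero_of_le (Nat.le_add_right_of_le hi)]

lemma odd_eq_sum (hP : DetRecurrence q N P) (hq0 : 0 ≤ q) (hq1 : q < 1) {s : ℕ}
    (hs : N ≤ 2 * (s + 1)) (m i : ℕ) :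
    P (2 * m + 1) i = qPochhammer (q ^ 3) (q ^ 2) m *
      ∑ j ∈ Finset.range (s + 1), qPochhammerInvCoeff (q ^ 3) (q ^ 2) m j * P 1 (i + 2 * j) := by
  have hu1 : q ^ 2 < 1 := pow_lt_one₀ hq0 hq1 two_ne_zero
  induction m generalizing i with
  | zero =>
    rw [Finset.sum_range_succ']
    simp [qPochhammer, qPochhammerInvCoeff_zero_succ, qPochhammerInvCoeff_zero_right]
  | succ m ih =>
    refine sub_eq_zero.1 (eq_zero_of_eq_mul_shift (c := q ^ (2 * m + 3)) (N := N) (y := fun i =>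
      P (2 * m + 3) i - qPochhammer (q ^ 3) (q ^ 2) (m + 1) * ∑ j ∈ Finset.range (s + 1),
        qPochhammerInvCoeff (q ^ 3) (q ^ 2) (m + 1) j * P 1 (i + 2 * j))
      two_ne_zero (fun i hi => ?_) (fun i => ?_) i)
    · simp [hP.zero_of_le _ _ hi, hP.zero_of_le _ _ (Nat.le_add_right_of_le hi)]
    · have hlast : ∑ j ∈ Finset.range (s + 1),
          qPochhammerInvCoeff (q ^ 3) (q ^ 2) (m + 1) j * P 1 (i + 2 + 2 * j) =
          ∑ j ∈ Finset.range s,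
            qPochhammerInvCoeff (q ^ 3) (q ^ 2) (m + 1) j * P 1 (i + 2 + 2 * j) := by
        rw [Finset.sum_range_succ, hP.zero_of_le 1 _ (by lia), mul_zero, add_zero]
      have hsum := sum_qPochhammerInvCoeff_succ (y := q ^ 3) (sq_nonneg q) hu1
        (fun j => P 1 (i + 2 * j)) m s
      simp only [mul_add_one, ← add_assoc, add_right_comm _ _ 2] at hsum
      rw [hP.odd_step m i, ih i, hsum, hlast, qPochhammer_succ]
      ring

end DetRecurrence

end Recurrence

section EulerSeries

variable {y u : ℝ}

/-- Euler's series `∑ y ^ j / (u; u)_j`, the expansion of `1 / (y; u)_∞`. -/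
noncomputable def eulerSeries (y u : ℝ) : ℝ :=
  ∑' j : ℕ, y ^ j / PiProd j u

lemma one_sub_pow_succ_pos (hu0 : 0 ≤ u) (hu1 : u < 1) (j : ℕ) : 0 < 1 - u ^ (j + 1) :=
  sub_pos.2 (pow_lt_one₀ hu0 hu1 j.succ_ne_zero)

lemma PiProd_succ (j : ℕ) (u : ℝ) : PiProd (j + 1) u = PiProd j u * (1 - u ^ (j + 1)) :=
  Finset.prod_range_succ _ _

lemma summable_eulerSeries (hu0 : 0 ≤ u) (hu1 : u < 1) (hy0 : 0 ≤ y) (hy1 : y < 1) :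
    Summable fun j : ℕ => y ^ j / PiProd j u := by
  have hnonneg (j : ℕ) : 0 ≤ y ^ j / PiProd j u := div_nonneg (pow_nonneg hy0 j)
    (PiProd_pos hu0 hu1 j).le
  have hratio : Tendsto (fun j : ℕ => y / (1 - u ^ (j + 1))) atTop (𝓝 y) := by
    have hpow := (tendsto_add_atTop_iff_nat 1).2 (tendsto_pow_atTop_nhds_zero_of_lt_one hu0 hu1)
    have hdiv := (tendsto_const_nhds (x := y)).div (hpow.const_sub 1) (by simp)
    rwa [sub_zero, div_one] at hdiv
  obtain ⟨r, hyr, hr1⟩ := exists_between hy1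
  refine summable_of_ratio_norm_eventually_le hr1 ((hratio.eventually_le_const hyr).mono
    fun j hj => ?_)
  rw [Real.norm_of_nonneg (hnonneg _), Real.norm_of_nonneg (hnonneg _), PiProd_succ, pow_succ',
    mul_comm (PiProd j u), mul_div_mul_comm]
  exact mul_le_mul_of_nonneg_right hj (hnonneg j)

lemma one_le_eulerSeries (hu0 : 0 ≤ u) (hu1 : u < 1) (hy0 : 0 ≤ y) (hy1 : y < 1) :
    1 ≤ eulerSeries y u := by
  simpa [eulerSeries, PiProd] using (summable_eulerSeries hu0 hu1 hy0 hy1).le_tsum 0 fun j _ =>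
    div_nonneg (pow_nonneg hy0 j) (PiProd_pos hu0 hu1 j).le

lemma eulerSeries_pos (hu0 : 0 ≤ u) (hu1 : u < 1) (hy0 : 0 ≤ y) (hy1 : y < 1) :
    0 < eulerSeries y u :=
  zero_lt_one.trans_le (one_le_eulerSeries hu0 hu1 hy0 hy1)

lemma one_sub_mul_eulerSeries (hu0 : 0 ≤ u) (hu1 : u < 1) (hy0 : 0 ≤ y) (hy1 : y < 1) :
    (1 - y) * eulerSeries y u = eulerSeries (u * y) u := by
  have hs := summable_eulerSeries hu0 hu1 hy0 hy1
  have hs' := summable_eulerSeries hu0 hu1 (mul_nonneg hu0 hy0)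
    (mul_lt_one_of_nonneg_of_lt_one_left hu0 hu1 hy1.le)
  have hdiff : eulerSeries y u - eulerSeries (u * y) u = y * eulerSeries y u := by
    rw [eulerSeries, eulerSeries, ← hs.tsum_sub hs', (hs.sub hs').tsum_eq_zero_add, ← tsum_mul_left]
    simp only [pow_zero, sub_self, zero_add]
    refine tsum_congr fun j => ?_
    have hj := (PiProd_pos hu0 hu1 j).ne'
    have hj' := (one_sub_pow_succ_pos hu0 hu1 j).ne'
    rw [PiProd_succ, mul_pow, pow_succ y]
    field_simp
  linear_combination hdiff

lemma qPochhammer_mul_eulerSeries (hu0 : 0 ≤ u) (hu1 : u < 1) (hy0 : 0 ≤ y) (hy1 : y < 1)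
    (m : ℕ) : qPochhammer y u m * eulerSeries y u = eulerSeries (u ^ m * y) u := by
  induction m with
  | zero => simp [qPochhammer]
  | succ m ih =>
    rw [qPochhammer_succ, mul_right_comm, ih, mul_comm, one_sub_mul_eulerSeries hu0 hu1
      (mul_nonneg (pow_nonneg hu0 m) hy0) (mul_lt_one_of_nonneg_of_lt_one_right
        (pow_le_one₀ hu0 hu1.le) hy0 hy1), ← mul_assoc, ← pow_succ']

lemma tendsto_eulerSeries_pow_mul (hu0 : 0 ≤ u) (hu1 : u < 1) (hy0 : 0 ≤ y) (hy1 : y < 1) :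
    Tendsto (fun m : ℕ => eulerSeries (u ^ m * y) u) atTop (𝓝 1) := by
  have hzero : eulerSeries 0 u = 1 := by
    rw [eulerSeries, tsum_eq_single 0 fun j hj => by simp [hj]]
    simp [PiProd]
  rw [← hzero]
  refine tendsto_tsum_of_dominated_convergence (summable_eulerSeries hu0 hu1 hy0 hy1)
    (fun j => ?_) (.of_forall fun m j => ?_)
  · have hpow := (tendsto_pow_atTop_nhds_zero_of_lt_one hu0 hu1).mul_const y
    rw [zero_mul] at hpow
    exact (hpow.pow j).div_const _
  · have hm := mul_nonneg (pow_nonneg hu0 m) hy0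
    have hj := (PiProd_pos hu0 hu1 j).le
    rw [Real.norm_of_nonneg (div_nonneg (pow_nonneg hm j) hj)]
    gcongr
    exact mul_le_of_le_one_left hy0 (pow_le_one₀ hu0 hu1.le)

lemma tendsto_qPochhammer (hu0 : 0 ≤ u) (hu1 : u < 1) (hy0 : 0 ≤ y) (hy1 : y < 1) :
    Tendsto (qPochhammer y u) atTop (𝓝 (eulerSeries y u)⁻¹) := by
  have hlim := (tendsto_eulerSeries_pow_mul hu0 hu1 hy0 hy1).mul_const (eulerSeries y u)⁻¹
  rw [one_mul] at hlim
  refine hlim.congr fun m => ?_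
  rw [← qPochhammer_mul_eulerSeries hu0 hu1 hy0 hy1,
    mul_inv_cancel_right₀ (eulerSeries_pos hu0 hu1 hy0 hy1).ne']

lemma PiProdInf_eq_inv_eulerSeries (hu0 : 0 ≤ u) (hu1 : u < 1) :
    PiProdInf u = (eulerSeries u u)⁻¹ := by
  have hmul : Multipliable fun j : ℕ => 1 - u ^ (j + 1) := by
    simp only [sub_eq_add_neg]
    refine multipliable_one_add_of_summable ?_
    simp only [norm_neg, norm_pow, Real.norm_of_nonneg hu0]
    exact (summable_nat_add_iff 1).2 (summable_geometric_of_lt_one hu0 hu1)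
  exact tendsto_nhds_unique hmul.hasProd.tendsto_prod_nat (tendsto_qPochhammer hu0 hu1 hu0 hu1)

lemma PiProd_two_mul (q : ℝ) (m : ℕ) :
    PiProd (2 * m) q = qPochhammer q (q ^ 2) m * PiProd m (q ^ 2) := by
  induction m with
  | zero => simp [PiProd, qPochhammer]
  | succ m ih =>
    rw [mul_add_one, PiProd_succ, PiProd_succ, PiProd_succ, ih, qPochhammer_succ]
    ring

lemma PiProdInf_div_PiProdInf_sq {q : ℝ} (hq0 : 0 ≤ q) (hq1 : q < 1) :
    PiProdInf q / PiProdInf (q ^ 2) = (eulerSeries q (q ^ 2))⁻¹ := by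
  have hu0 := sq_nonneg q
  have hu1 : q ^ 2 < 1 := pow_lt_one₀ hq0 hq1 two_ne_zero
  rw [PiProdInf_eq_inv_eulerSeries hq0 hq1, PiProdInf_eq_inv_eulerSeries hu0 hu1,
    div_eq_iff (inv_ne_zero (eulerSeries_pos hu0 hu1 hu0 hu1).ne')]
  refine tendsto_nhds_unique ((tendsto_qPochhammer hq0 hq1 hq0 hq1).comp
    (tendsto_id.const_mul_atTop' two_pos)) ?_
  refine ((tendsto_qPochhammer hu0 hu1 hq0 hq1).mul
    (tendsto_qPochhammer hu0 hu1 hu0 hu1)).congr fun m => ?_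
  exact (PiProd_two_mul q m).symm

lemma tendsto_qPochhammerInvCoeff (hu0 : 0 ≤ u) (hu1 : u < 1) (y : ℝ) (j : ℕ) :
    Tendsto (fun m => qPochhammerInvCoeff y u m j) atTop (𝓝 (y ^ j / PiProd j u)) := by
  have hprod : Tendsto (fun m => qPochhammer (u ^ m) u j) atTop (𝓝 1) := by
    have hfactor (i : ℕ) : Tendsto (fun m : ℕ => 1 - u ^ i * u ^ m) atTop (𝓝 1) := by
      simpa using ((tendsto_pow_atTop_nhds_zero_of_lt_one hu0 hu1).const_mul (u ^ i)).const_sub 1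
    simpa [qPochhammer] using tendsto_finsetProd (Finset.range j) fun i _ => hfactor i
  simpa [qPochhammerInvCoeff] using (hprod.const_mul (y ^ j)).div_const (PiProd j u)

end EulerSeries

section Limit

lemma tendsto_of_tendsto_even_of_tendsto_odd {X : Type*} [TopologicalSpace X] {f : ℕ → X} {x : X}
    (heven : Tendsto (fun m => f (2 * m)) atTop (𝓝 x))
    (hodd : Tendsto (fun m => f (2 * m + 1)) atTop (𝓝 x)) : Tendsto f atTop (𝓝 x) := by
  intro S hS
  obtain ⟨a, ha⟩ := mem_atTop_sets.1 (heven hS)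
  obtain ⟨b, hb⟩ := mem_atTop_sets.1 (hodd hS)
  refine mem_atTop_sets.2 ⟨2 * max a b, fun n hn => ?_⟩
  rcases n.even_or_odd' with ⟨m, rfl | rfl⟩
  · exact ha m (by lia)
  · exact hb m (by lia)

variable {q : ℝ}

namespace DetRecurrence

variable {N : ℕ} {P : ℕ → ℕ → ℝ}

lemma tendsto_odd (hP : DetRecurrence q N P) (hq0 : 0 ≤ q) (hq1 : q < 1) {s : ℕ}
    (hs : N ≤ 2 * (s + 1)) (i : ℕ) :
    Tendsto (fun m => P (2 * m + 1) i) atTop (𝓝 ((eulerSeries (q ^ 3) (q ^ 2))⁻¹ *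
      ∑ j ∈ Finset.range (s + 1), (q ^ 3) ^ j / PiProd j (q ^ 2) * P 1 (i + 2 * j))) := by
  have hu1 : q ^ 2 < 1 := pow_lt_one₀ hq0 hq1 two_ne_zero
  simp only [hP.odd_eq_sum hq0 hq1 hs]
  exact (tendsto_qPochhammer (sq_nonneg q) hu1 (pow_nonneg hq0 3)
    (pow_lt_one₀ hq0 hq1 three_ne_zero)).mul (tendsto_finsetSum _ fun j _ =>
      (tendsto_qPochhammerInvCoeff (sq_nonneg q) hu1 _ j).mul_const _)

lemma tendsto_of_tendsto_odd (hP : DetRecurrence q N P) (hq0 : 0 ≤ q) (hq1 : q < 1) {i : ℕ}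
    {x x' : ℝ} (hi : Tendsto (fun m => P (2 * m + 1) i) atTop (𝓝 x))
    (hi' : Tendsto (fun m => P (2 * m + 1) (i + 1)) atTop (𝓝 x')) :
    Tendsto (fun n => P n i) atTop (𝓝 x) := by
  refine tendsto_of_tendsto_even_of_tendsto_odd ?_ hi
  have hpow : Tendsto (fun m => q ^ (2 * m + 1)) atTop (𝓝 0) :=
    (tendsto_pow_atTop_nhds_zero_of_lt_one hq0 hq1).comp
      (tendsto_atTop_mono (fun m => show m ≤ 2 * m + 1 by lia) tendsto_id)
  have heven := (hi.sub (hpow.mul hi')).div (hpow.const_sub 1) (by simp)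
  rw [zero_mul, sub_zero, sub_zero, div_one] at heven
  refine heven.congr fun m => ?_
  rw [Pi.div_apply, div_eq_iff (one_sub_pow_succ_pos hq0 hq1 (2 * m)).ne', hP.odd_eq m i]
  ring

theorem tendsto (hP : DetRecurrence q N P) (hq0 : 0 ≤ q) (hq1 : q < 1) {s : ℕ}
    (hs : N ≤ 2 * (s + 1)) (i : ℕ) :
    Tendsto (fun n => P n i) atTop (𝓝 ((eulerSeries (q ^ 3) (q ^ 2))⁻¹ *
      ∑ j ∈ Finset.range (s + 1), (q ^ 3) ^ j / PiProd j (q ^ 2) * P 1 (i + 2 * j))) :=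
  hP.tendsto_of_tendsto_odd hq0 hq1 (hP.tendsto_odd hq0 hq1 hs i)
    (hP.tendsto_odd hq0 hq1 hs (i + 1))

end DetRecurrence

/-- The terms of the series in the formula for the limiting proportion of singular matrices. -/
noncomputable def limitTerm (q : ℝ) (μ j : ℕ) : ℝ :=
  (q ^ (μ + j) - q ^ (3 * j)) / PiProd j (q ^ 2)

lemma limitTerm_nonneg (hq0 : 0 ≤ q) (hq1 : q < 1) {μ j : ℕ} (hj : μ ≤ 2 * j) :
    0 ≤ limitTerm q μ j :=
  div_nonneg (sub_nonneg.2 (pow_le_pow_of_le_one hq0 hq1.le (by lia)))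
    (PiProd_pos (sq_nonneg q) (pow_lt_one₀ hq0 hq1 two_ne_zero) j).le

lemma limitTerm_le (hq0 : 0 ≤ q) (hq1 : q < 1) (μ j : ℕ) :
    limitTerm q μ j ≤ q ^ μ * limitTerm q 0 j := by
  have hpow : q ^ μ * q ^ (3 * j) ≤ q ^ (3 * j) :=
    mul_le_of_le_one_left (pow_nonneg hq0 _) (pow_le_one₀ hq0 hq1.le)
  rw [limitTerm, limitTerm, ← mul_div_assoc, zero_add, mul_sub, ← pow_add]
  exact div_le_div_of_nonneg_right (sub_le_sub_left hpow _)
    (PiProd_pos (sq_nonneg q) (pow_lt_one₀ hq0 hq1 two_ne_zero) j).le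

lemma eulerSeries_pow_three_sq (hq0 : 0 ≤ q) (hq1 : q < 1) :
    eulerSeries (q ^ 3) (q ^ 2) = (1 - q) * eulerSeries q (q ^ 2) := by
  rw [one_sub_mul_eulerSeries (sq_nonneg q) (pow_lt_one₀ hq0 hq1 two_ne_zero) hq0 hq1, ← pow_succ]

lemma hasSum_limitTerm (hq0 : 0 ≤ q) (hq1 : q < 1) (μ : ℕ) :
    HasSum (limitTerm q μ) ((q ^ μ - (1 - q)) * eulerSeries q (q ^ 2)) := by
  have hu1 : q ^ 2 < 1 := pow_lt_one₀ hq0 hq1 two_ne_zero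
  have hone : HasSum (fun j : ℕ => q ^ j / PiProd j (q ^ 2)) (eulerSeries q (q ^ 2)) :=
    (summable_eulerSeries (sq_nonneg q) hu1 hq0 hq1).hasSum
  have hthree : HasSum (fun j : ℕ => (q ^ 3) ^ j / PiProd j (q ^ 2))
      ((1 - q) * eulerSeries q (q ^ 2)) :=
    eulerSeries_pow_three_sq hq0 hq1 ▸ (summable_eulerSeries (sq_nonneg q) hu1 (pow_nonneg hq0 3)
      (pow_lt_one₀ hq0 hq1 three_ne_zero)).hasSum
  rw [sub_mul]
  refine ((hone.mul_left (q ^ μ)).sub hthree).congr_fun fun j => ?_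
  rw [limitTerm, pow_add, pow_mul, sub_div, mul_div_assoc]

lemma sum_limitTerm_add_tsum (hq0 : 0 ≤ q) (hq1 : q < 1) (μ k : ℕ) :
    ∑ j ∈ Finset.range k, limitTerm q μ j + ∑' j, limitTerm q μ (k + j) =
      (q ^ μ - (1 - q)) * eulerSeries q (q ^ 2) := by
  have hsum := hasSum_limitTerm hq0 hq1 μ
  rw [← hsum.tsum_eq, ← hsum.summable.sum_add_tsum_nat_add k]
  simp only [add_comm k]

lemma tsum_limitTerm_nonneg (hq0 : 0 ≤ q) (hq1 : q < 1) {μ k : ℕ} (hk : μ ≤ 2 * k) :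
    0 ≤ ∑' j, limitTerm q μ (k + j) :=
  tsum_nonneg fun _ => limitTerm_nonneg hq0 hq1 (by lia)

lemma tsum_limitTerm_le (hq0 : 0 ≤ q) (hq1 : q < 1) (μ k : ℕ) :
    ∑' j, limitTerm q μ (k + j) ≤ q ^ (μ + 1) * eulerSeries q (q ^ 2) := by
  have hsummable (μ : ℕ) : Summable fun j => limitTerm q μ (k + j) :=
    (hasSum_limitTerm hq0 hq1 μ).summable.comp_injective (add_right_injective k)
  have hzero := sum_limitTerm_add_tsum hq0 hq1 0 k
  rw [pow_zero, sub_sub_cancel] at hzero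
  have hhead : 0 ≤ ∑ j ∈ Finset.range k, limitTerm q 0 j :=
    Finset.sum_nonneg fun _ _ => limitTerm_nonneg hq0 hq1 (Nat.zero_le _)
  calc ∑' j, limitTerm q μ (k + j)
      ≤ ∑' j, q ^ μ * limitTerm q 0 (k + j) :=
        (hsummable μ).tsum_le_tsum (fun _ => limitTerm_le hq0 hq1 _ _) ((hsummable 0).mul_left _)
    _ = q ^ μ * ∑' j, limitTerm q 0 (k + j) := tsum_mul_left
    _ ≤ q ^ μ * (q * eulerSeries q (q ^ 2)) :=
        mul_le_mul_of_nonneg_left (by linarith) (pow_nonneg hq0 μ)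
    _ = q ^ (μ + 1) * eulerSeries q (q ^ 2) := by rw [pow_succ q μ, mul_assoc]

/-- The limit, as `n → ∞`, of the proportion of symmetric `n × n` matrices with determinant `0`. -/
noncomputable def singularLimit (q : ℝ) (μ s : ℕ) : ℝ :=
  (q ^ μ - (PiProdInf q / PiProdInf (q ^ 2)) * ∑' j, limitTerm q μ (s + 1 + j)) / (1 - q)

lemma le_singularLimit (hq0 : 0 ≤ q) (hq1 : q < 1) (μ s : ℕ) : q ^ μ ≤ singularLimit q μ s := by
  have hpos := eulerSeries_pos (sq_nonneg q) (pow_lt_one₀ hq0 hq1 two_ne_zero) hq0 hq1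
  have htail := (inv_mul_le_iff₀' hpos).2 (tsum_limitTerm_le hq0 hq1 μ (s + 1))
  rw [singularLimit, PiProdInf_div_PiProdInf_sq hq0 hq1, le_div_iff₀ (sub_pos.2 hq1)]
  rw [pow_succ q μ] at htail
  linarith

lemma singularLimit_le (hq0 : 0 ≤ q) (hq1 : q < 1) {μ s : ℕ} (hs : μ ≤ 2 * (s + 1)) :
    singularLimit q μ s ≤ q ^ μ / (1 - q) := by
  have hpos := eulerSeries_pos (sq_nonneg q) (pow_lt_one₀ hq0 hq1 two_ne_zero) hq0 hq1
  rw [singularLimit, PiProdInf_div_PiProdInf_sq hq0 hq1]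
  exact div_le_div_of_nonneg_right
    (sub_le_self _ (mul_nonneg (inv_nonneg.2 hpos.le) (tsum_limitTerm_nonneg hq0 hq1 hs)))
    (sub_pos.2 hq1).le

lemma one_sub_singularLimit (hq0 : 0 ≤ q) (hq1 : q < 1) {μ s : ℕ} (hs : 2 * s ≤ μ) :
    1 - singularLimit q μ s = (eulerSeries (q ^ 3) (q ^ 2))⁻¹ *
      ∑ j ∈ Finset.range (s + 1), (q ^ 3) ^ j / PiProd j (q ^ 2) * (1 - q ^ (μ - 2 * j)) := by
  have hpos := (eulerSeries_pos (sq_nonneg q) (pow_lt_one₀ hq0 hq1 two_ne_zero) hq0 hq1).ne'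
  have hq := (sub_pos.2 hq1).ne'
  have hterm : ∑ j ∈ Finset.range (s + 1), (q ^ 3) ^ j / PiProd j (q ^ 2) * (1 - q ^ (μ - 2 * j)) =
      -∑ j ∈ Finset.range (s + 1), limitTerm q μ j := by
    rw [← Finset.sum_neg_distrib]
    refine Finset.sum_congr rfl fun j hj => ?_
    have hexp : μ + j = 3 * j + (μ - 2 * j) := by
      have := Finset.mem_range.1 hj
      lia
    rw [limitTerm, hexp, pow_add, pow_mul]
    ring
  rw [hterm, eq_sub_of_add_eq (sum_limitTerm_add_tsum hq0 hq1 μ (s + 1)), singularLimit,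
    PiProdInf_div_PiProdInf_sq hq0 hq1, eulerSeries_pow_three_sq hq0 hq1]
  field_simp
  ring

theorem DetRecurrence.tendsto_one_sub {N : ℕ} {P : ℕ → ℕ → ℝ} (hP : DetRecurrence q N P)
    (hq0 : 0 ≤ q) (hq1 : q < 1) :
    Tendsto (fun n => 1 - P n 0) atTop (𝓝 (singularLimit q N ((N - 1) / 2))) := by
  have hlim := (hP.tendsto hq0 hq1 (s := (N - 1) / 2) (by lia) 0).const_sub 1
  simp only [zero_add, hP.one_left] at hlim
  rwa [← one_sub_singularLimit hq0 hq1 (by lia), sub_sub_cancel] at hlim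

end Limit

section ChainRing

variable {R : Type*} [CommRing R] [Fintype R] [DecidableEq R] [IsLocalRing R] {π : R}

theorem detRecurrence_symmDetMean (hπ : maximalIdeal R = Ideal.span {π}) {μ : ℕ}
    (hμ : ∀ i, π ^ i = 0 ↔ μ ≤ i) {q : ℝ} (hq : q = 1 / Nat.card (ResidueField R)) :
    DetRecurrence q μ fun n i => symmDetMean n fun d : R => if π ^ i * d = 0 then 0 else 1 where
  zero_of_le n i hi := by simp [symmDetMean, (hμ i).2 hi]
  zero_left i hi := by
    have : Nonempty (SymmMatrix (Fin 0) R) := ⟨0, isSymm_zero⟩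
    simp [symmDetMean, (hμ i).not.2 hi.not_ge]
  step n i := by
    have hF (u d : R) (hu : IsUnit u) :
        (if π ^ i * (u * d) = 0 then 0 else 1 : ℝ) = if π ^ i * d = 0 then 0 else 1 := by
      simp only [mul_left_comm _ u, hu.mul_right_eq_zero]
    simpa only [← mul_assoc, ← pow_succ] using
      symmDetMean_recurrence (F := fun d => if π ^ i * d = 0 then 0 else 1) hπ hq hF n

end ChainRing

theorem Qsym_tendsto_general {R : Type*} [CommRing R] [Finite R] [IsLocalRing R] {π : R}
    (hπ : maximalIdeal R = Ideal.span {π}) (μ : ℕ) (hμ : ∀ i, π ^ i = 0 ↔ μ ≤ i)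
    (q : ℝ) (hq : q = 1 / Nat.card (ResidueField R)) (s : ℕ) (hs : s = (μ - 1) / 2) (L : ℝ)
    (hL : L = (q ^ μ - (PiProdInf q / PiProdInf (q ^ 2)) *
      ∑' j : ℕ, (q ^ (μ + (s + 1 + j)) - q ^ (3 * (s + 1 + j))) /
        PiProd (s + 1 + j) (q ^ 2)) / (1 - q)) :
    Tendsto (fun n => 1 -
      (Nat.card {A : Matrix (Fin n) (Fin n) R // A.IsSymm ∧ A.det ≠ 0} : ℝ) /
        (Nat.card R : ℝ) ^ (n * (n + 1) / 2)) atTop (𝓝 L) ∧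
      q ^ μ ≤ L ∧ L ≤ q ^ μ / (1 - q) := by
  classical
  cases nonempty_fintype R
  have : Finite (ResidueField R) := .of_surjective _ residue_surjective
  have hcard : 1 < Nat.card (ResidueField R) := Finite.one_lt_card
  have hq0 : 0 ≤ q := hq ▸ by positivity
  have hq1 : q < 1 := by
    rw [hq, one_div]
    exact inv_lt_one_of_one_lt₀ (Nat.one_lt_cast.2 hcard)
  replace hL : L = singularLimit q μ s := hL
  subst hs hL
  refine ⟨?_, le_singularLimit hq0 hq1 _ _, singularLimit_le hq0 hq1 (by lia)⟩
  simpa only [pow_zero, one_mul, symmDetMean_ite_eq_zero] using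
    (detRecurrence_symmDetMean hπ hμ hq).tendsto_one_sub hq0 hq1

section PrimePower

variable {p N : ℕ}

lemma isLocalHom_castHom_pow (hN : N ≠ 0) :
    IsLocalHom (ZMod.castHom (dvd_pow_self p hN) (ZMod p)) where
  map_nonunit x hx := by
    obtain ⟨x, rfl⟩ := ZMod.intCast_surjective x
    rw [map_intCast, ZMod.coe_int_isUnit_iff_isCoprime] at hx
    rw [ZMod.coe_int_isUnit_iff_isCoprime, Nat.cast_pow]
    exact hx.pow_left

lemma ker_castHom_pow (hN : N ≠ 0) :
    RingHom.ker (ZMod.castHom (dvd_pow_self p hN) (ZMod p)) =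
      Ideal.span {(p : ZMod (p ^ N))} := by
  ext x
  obtain ⟨x, rfl⟩ := ZMod.intCast_surjective x
  rw [RingHom.mem_ker, map_intCast, Ideal.mem_span_singleton]
  refine ⟨fun hx => ?_, fun ⟨y, hy⟩ => ?_⟩
  · exact_mod_cast Int.cast_dvd_cast _ _ ((ZMod.intCast_zmod_eq_zero_iff_dvd x p).1 hx)
  · rw [← map_intCast (ZMod.castHom (dvd_pow_self p hN) (ZMod p)), hy, map_mul, map_natCast,
      CharP.cast_eq_zero, zero_mul]

lemma isLocalRing_zmod_prime_pow (hp : p.Prime) (hN : N ≠ 0) : IsLocalRing (ZMod (p ^ N)) :=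
  have := Fact.mk hp
  have := isLocalHom_castHom_pow (p := p) hN
  (ZMod.castHom (dvd_pow_self p hN) (ZMod p)).domain_isLocalRing

lemma maximalIdeal_zmod_prime_pow [IsLocalRing (ZMod (p ^ N))] (hp : p.Prime) (hN : N ≠ 0) :
    maximalIdeal (ZMod (p ^ N)) = Ideal.span {(p : ZMod (p ^ N))} := by
  have := Fact.mk hp
  rw [← ker_castHom_pow hN, ker_eq_maximalIdeal _ (ZMod.castHom_surjective _)]

lemma natCard_residueField_zmod_prime_pow [IsLocalRing (ZMod (p ^ N))] (hp : p.Prime)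
    (hN : N ≠ 0) : Nat.card (ResidueField (ZMod (p ^ N))) = p := by
  have := Fact.mk hp
  rw [ResidueField, maximalIdeal_zmod_prime_pow hp hN, ← ker_castHom_pow hN,
    Nat.card_congr (RingHom.quotientKerEquivOfSurjective
      (ZMod.castHom_surjective (dvd_pow_self p hN))).toEquiv, Nat.card_zmod]

lemma natCast_prime_pow_eq_zero_iff (hp : p.Prime) (i : ℕ) :
    (p : ZMod (p ^ N)) ^ i = 0 ↔ N ≤ i := by
  rw [← Nat.cast_pow, ZMod.natCast_eq_zero_iff, Nat.pow_dvd_pow_iff_le_right hp.one_lt]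

end PrimePower

theorem Qsym_tendsto (p : ℕ) (hp : p.Prime) (q : ℝ) (hq : q = 1 / p)
    (μ : ℕ) (hμ : 1 ≤ μ) (s : ℕ) (hs : s = (μ - 1) / 2) (L : ℝ)
    (hL : L = (q ^ μ - (PiProdInf q / PiProdInf (q ^ 2)) *
      ∑' j : ℕ, (q ^ (μ + (s + 1 + j)) - q ^ (3 * (s + 1 + j))) /
        PiProd (s + 1 + j) (q ^ 2)) / (1 - q)) :
    Filter.Tendsto (fun n : ℕ => Qsym n (p ^ μ)) Filter.atTop (nhds L) ∧
      q ^ μ ≤ L ∧ L ≤ q ^ μ / (1 - q) := by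
  have hμ0 : μ ≠ 0 := Nat.one_le_iff_ne_zero.1 hμ
  have : NeZero (p ^ μ) := ⟨pow_ne_zero μ hp.ne_zero⟩
  have := isLocalRing_zmod_prime_pow hp hμ0
  rw [← natCard_residueField_zmod_prime_pow hp hμ0] at hq
  simpa only [Qsym, Psym, Nsym, Nat.card_zmod] using
    Qsym_tendsto_general (maximalIdeal_zmod_prime_pow hp hμ0) μ
      (natCast_prime_pow_eq_zero_iff hp) q hq s hs L hL
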